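/- Let B be a type and let σ be any monoid congruence on FreeMonoid (B × Bool) containing the Vagner congruence ν. (i) If x * [ℓ] * [ℓ⁻¹] * y is right invertible modulo σ, where ℓ is a single letter with formal inverse ℓ⁻¹ and x, y are words, then σ relates x * [ℓ] * [ℓ⁻¹] * y to x * y. (ii) Consequently, for every word w that is right invertible modulo σ, σ relates w to its free reduction, i.e., to the word (FreeGroup.mk w).toWord. -/

import Mathlib

/-- The formal inverse of a word over `B`: reverse the word and negate the `Bool` component
of each letter. -/
def wInv {B : Type*} (w : FreeMonoid (B × Bool)) : FreeMonoid (B × Bool) :=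
  FreeMonoid.ofList (((FreeMonoid.toList w).map fun p => (p.1, !p.2)).reverse)

/-- The generating relation of the Vagner congruence: `w w⁻¹ w ~ w` and
`w w⁻¹ u u⁻¹ ~ u u⁻¹ w w⁻¹` for all words `u, w`. -/
def vagnerRel (B : Type*) : FreeMonoid (B × Bool) → FreeMonoid (B × Bool) → Prop :=
  fun x y =>
    (∃ w, x = w * wInv w * w ∧ y = w) ∨
    (∃ u w, x = w * wInv w * (u * wInv u) ∧ y = u * wInv u * (w * wInv w))

/-- The Vagner congruence on `FreeMonoid (B × Bool)`. -/
def vagnerCon (B : Type*) : Con (FreeMonoid (B × Bool)) := conGen (vagnerRel B)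

/-! Modulo `σ`, every prefix `w` of a right invertible word satisfies `w w⁻¹ = 1`: multiply
`w w⁻¹ w = w` on the right by a right inverse of `w`. Since `x⁻¹ x` and `t t⁻¹` commute, it follows
that `x t t⁻¹ = x (x⁻¹ x) (t t⁻¹) = (x t) (x t)⁻¹ x = x` whenever `x t` is such a prefix. Hence a
free reduction step does not change the class of a right invertible word, and the shorter word is
again right invertible. -/

section Monoid

variable {M : Type*} [Monoid M]

theorem mul_eq_one_of_mul_mul_eq_self {a a' b : M} (ha : a * a' * a = a) (hab : a * b = 1) :
    a * a' = 1 :=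
  calc a * a' = a * a' * a * b := by rw [mul_assoc _ a, hab, mul_one]
    _ = 1 := by rw [ha, hab]

theorem mul_mul_eq_left_of_commute {x x' t t' : M} (hx : x * x' * x = x)
    (hcomm : Commute (x' * x) (t * t')) (hxt : x * t * (t' * x') = 1) : x * t * t' = x :=
  calc x * t * t' = x * x' * x * t * t' := by rw [hx]
    _ = x * (x' * x * (t * t')) := by simp only [mul_assoc]
    _ = x * (t * t' * (x' * x)) := by rw [hcomm.eq]
    _ = x * t * (t' * x') * x := by simp only [mul_assoc]
    _ = x := by rw [hxt, one_mul]

/-- Right invertibility of `u` modulo the congruence `σ`, that is, existence of a right inverse of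
the class of `u` in the quotient. -/
def RightInvertibleMod (σ : Con M) (u : M) : Prop :=
  ∃ v, σ (u * v) 1

namespace RightInvertibleMod

variable {σ : Con M} {u v : M}

theorem of_mul_right (h : RightInvertibleMod σ (u * v)) : RightInvertibleMod σ u := by
  obtain ⟨z, hz⟩ := h
  exact ⟨v * z, by rwa [← mul_assoc]⟩

theorem congr (h : RightInvertibleMod σ u) (huv : σ u v) : RightInvertibleMod σ v := by
  obtain ⟨z, hz⟩ := h
  exact ⟨z, σ.trans (σ.mul (σ.symm huv) (σ.refl z)) hz⟩

end RightInvertibleMod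

end Monoid

section Words

variable {B : Type*}

theorem wInv_mul (u v : FreeMonoid (B × Bool)) : wInv (u * v) = wInv v * wInv u :=
  FreeGroup.invRev_append

theorem wInv_wInv (w : FreeMonoid (B × Bool)) : wInv (wInv w) = w :=
  FreeGroup.invRev_invRev

theorem wInv_of (ℓ : B × Bool) : wInv (FreeMonoid.of ℓ) = FreeMonoid.of (ℓ.1, !ℓ.2) :=
  rfl

theorem vagnerCon_mul_wInv_mul (w : FreeMonoid (B × Bool)) : vagnerCon B (w * wInv w * w) w :=
  ConGen.Rel.of _ _ (Or.inl ⟨w, rfl, rfl⟩)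

theorem vagnerCon_mul_wInv_comm (u w : FreeMonoid (B × Bool)) :
    vagnerCon B (w * wInv w * (u * wInv u)) (u * wInv u * (w * wInv w)) :=
  ConGen.Rel.of _ _ (Or.inr ⟨u, w, rfl, rfl⟩)

variable {σ : Con (FreeMonoid (B × Bool))}

theorem RightInvertibleMod.mul_wInv_rel_one (hσ : vagnerCon B ≤ σ) {w : FreeMonoid (B × Bool)}
    (h : RightInvertibleMod σ w) : σ (w * wInv w) 1 := by
  obtain ⟨z, hz⟩ := h
  have hw : σ (w * wInv w * w) w := hσ (vagnerCon_mul_wInv_mul w)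
  simp only [← σ.eq, Con.coe_mul, Con.coe_one] at hw hz ⊢
  exact mul_eq_one_of_mul_mul_eq_self hw hz

theorem RightInvertibleMod.mul_mul_wInv_rel_left (hσ : vagnerCon B ≤ σ)
    {x t : FreeMonoid (B × Bool)} (h : RightInvertibleMod σ (x * t)) : σ (x * t * wInv t) x := by
  have hx : σ (x * wInv x * x) x := hσ (vagnerCon_mul_wInv_mul x)
  have hcomm : σ (wInv x * x * (t * wInv t)) (t * wInv t * (wInv x * x)) := by
    simpa only [wInv_wInv] using hσ (vagnerCon_mul_wInv_comm t (wInv x))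
  have hxt : σ (x * t * (wInv t * wInv x)) 1 := by
    simpa only [wInv_mul] using h.mul_wInv_rel_one hσ
  simp only [← σ.eq, Con.coe_mul, Con.coe_one] at hx hcomm hxt ⊢
  exact mul_mul_eq_left_of_commute hx hcomm hxt

theorem RightInvertibleMod.mul_mul_wInv_mul_rel_mul (hσ : vagnerCon B ≤ σ)
    {x t y : FreeMonoid (B × Bool)} (h : RightInvertibleMod σ (x * t * wInv t * y)) :
    σ (x * t * wInv t * y) (x * y) :=
  σ.mul (h.of_mul_right.of_mul_right.mul_mul_wInv_rel_left hσ) (σ.refl y)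

theorem RightInvertibleMod.rel_of_red_step (hσ : vagnerCon B ≤ σ) {L₁ L₂ : List (B × Bool)}
    (hstep : FreeGroup.Red.Step L₁ L₂) (h : RightInvertibleMod σ (FreeMonoid.ofList L₁)) :
    σ (FreeMonoid.ofList L₁) (FreeMonoid.ofList L₂) := by
  obtain @⟨L, L', b, ε⟩ := hstep
  have hword : FreeMonoid.ofList (L ++ (b, ε) :: (b, !ε) :: L') =
      FreeMonoid.ofList L * FreeMonoid.of (b, ε) * wInv (FreeMonoid.of (b, ε)) *
        FreeMonoid.ofList L' := by
    simp only [wInv_of, FreeMonoid.ofList_append, FreeMonoid.ofList_cons, mul_assoc]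
  rw [hword] at h ⊢
  exact h.mul_mul_wInv_mul_rel_mul hσ

theorem RightInvertibleMod.rel_of_red (hσ : vagnerCon B ≤ σ) {L₁ L₂ : List (B × Bool)}
    (hred : FreeGroup.Red L₁ L₂) (h : RightInvertibleMod σ (FreeMonoid.ofList L₁)) :
    σ (FreeMonoid.ofList L₁) (FreeMonoid.ofList L₂) := by
  induction hred using Relation.ReflTransGen.head_induction_on with
  | refl => exact σ.refl _
  | head hstep _ ih =>
    have hrel := h.rel_of_red_step hσ hstep
    exact σ.trans hrel (ih (h.congr hrel))

end Words

/-- For any congruence `σ` containing the Vagner congruence: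
(i) if `x ℓ ℓ⁻¹ y` is right invertible modulo `σ` (with `ℓ` a single letter), then `σ`
relates `x ℓ ℓ⁻¹ y` to `x y`; (ii) consequently, every word `w` that is right invertible
modulo `σ` is related by `σ` to its free reduction. -/
theorem rightInvertible_free_reduction {B : Type*} [DecidableEq B]
    (σ : Con (FreeMonoid (B × Bool))) (hσ : vagnerCon B ≤ σ) :
    (∀ (x y : FreeMonoid (B × Bool)) (ℓ : B × Bool),
      (∃ z, σ (x * FreeMonoid.of ℓ * FreeMonoid.of (ℓ.1, !ℓ.2) * y * z) 1) →
        σ (x * FreeMonoid.of ℓ * FreeMonoid.of (ℓ.1, !ℓ.2) * y) (x * y)) ∧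
    (∀ w : FreeMonoid (B × Bool),
      (∃ z, σ (w * z) 1) →
        σ w (FreeMonoid.ofList (FreeGroup.mk (FreeMonoid.toList w)).toWord)) := by
  refine ⟨fun x y ℓ h => ?_, fun w h => ?_⟩
  · rw [← wInv_of] at h ⊢
    exact RightInvertibleMod.mul_mul_wInv_mul_rel_mul hσ h
  · rw [FreeGroup.toWord_mk]
    exact RightInvertibleMod.rel_of_red (L₁ := w.toList) hσ FreeGroup.reduce.red h
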